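/- arXiv:2511.01507 — 6 statements merged into one kernel-verified Lean document; each statement's English description precedes it below -/
import Mathlib

section
/- Let q ≥ 3 and k ≥ 1 be integers and a, b > 0 real. For every t > 0, the operator W maps the vector of I₁ with parameter t to the vector of I₁ with parameter t' = ((t(b+q−2)+1)/((q−1)t+b))^k; in particular the set I₁ is invariant under W. -/
open Finset

/-- Spin-dependent power of `a`: `a^i` with `i = 1` encoded as `true`
and `i = -1` encoded as `false`. -/
noncomputable def spinPow (a : ℝ) : Bool → ℝ
  | true => a
  | false => a⁻¹

/-- The operator `W` of the (2,q)-Ising-Potts model on vectors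
`z ∈ ℝ^{2q-1}`, modelled as functions `Bool → ℕ → ℝ` (first argument: the
Ising spin `i ∈ {1,-1}` encoded as `true/false`, second argument: the Potts
spin `j ∈ {1,…,q}`), with the convention `z_{-1,q} = 1`.  Here `a = θ_I^α`,
`b = θ_P^{1-α}`, and `k` is the order of the Cayley tree. -/
noncomputable def Wop (q k : ℕ) (a b : ℝ) (z : Bool → ℕ → ℝ) : Bool → ℕ → ℝ :=
  fun i j =>
    if i = false ∧ j = q then 1
    else
      ((∑ v ∈ Icc 1 q, (spinPow a i * z true v + spinPow a (!i) * z false v) +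
          (b - 1) * (spinPow a i * z true j + spinPow a (!i) * z false j)) /
        (∑ v ∈ Icc 1 (q - 1), (a⁻¹ * z true v + a * z false v) +
          b * (a⁻¹ * z true q + a))) ^ k

/-- The vector of the invariant set `I₁` with parameter `t`:
`z_{1,1} = ⋯ = z_{1,q-1} = z_{-1,1} = ⋯ = z_{-1,q-1} = t` and
`z_{1,q} = 1` (together with the convention `z_{-1,q} = 1`). -/
noncomputable def iOneVec (q : ℕ) (t : ℝ) : Bool → ℕ → ℝ :=
  fun _ j => if j = q then 1 else t

/-!
A vector of `I₁` does not depend on the Ising spin. On such vectors the weights `a` and `a⁻¹` only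
ever occur in the sum `a + a⁻¹`, which cancels between numerator and denominator, so that `W`
becomes the recursion of the `q`-state Potts model. The coordinates `1, …, q` of the vector with
parameter `t` sum to `(q - 1) t + 1`, which makes this recursion explicit.
-/

theorem add_inv_ne_zero {K : Type*} [Field K] [LinearOrder K] [IsStrictOrderedRing K] {a : K}
    (ha : a ≠ 0) : a + a⁻¹ ≠ 0 := by
  have h : a + a⁻¹ = (a ^ 2 + 1) / a := by field_simp
  rw [h]
  exact div_ne_zero (by positivity) ha

theorem sum_update_const_of_mem {ι R : Type*} [DecidableEq ι] [Ring R] {s : Finset ι} {i : ι}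
    (hi : i ∈ s) (t c : R) :
    ∑ v ∈ s, Function.update (fun _ => t) i c v = ((#s : R) - 1) * t + c := by
  rw [sum_update_of_mem hi, sum_const, sdiff_singleton_eq_erase, nsmul_eq_mul,
    cast_card_erase_of_mem hi, add_comm]

theorem spinPow_add_spinPow_not (a : ℝ) (i : Bool) :
    spinPow a i + spinPow a (!i) = a + a⁻¹ := by
  cases i
  · exact add_comm _ _
  · rfl

/-- The boundary-law recursion of the `q`-state Potts model on the Cayley tree of order `k` with
edge weight `b`, normalised at the spin `q`. It is what remains of `Wop` on vectors that do not
depend on the Ising spin. As for `Wop`, the Potts spins are `1, …, q` inside `ℕ`. -/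
noncomputable def pottsOp (q k : ℕ) (b : ℝ) (x : ℕ → ℝ) : ℕ → ℝ :=
  fun j => ((∑ v ∈ Icc 1 q, x v + (b - 1) * x j) / (∑ v ∈ Icc 1 q, x v + (b - 1) * x q)) ^ k

section Potts

variable {q : ℕ} {b : ℝ}

theorem pottsOp_apply_self (k : ℕ) {x : ℕ → ℝ} (hx : ∑ v ∈ Icc 1 q, x v + (b - 1) * x q ≠ 0) :
    pottsOp q k b x q = 1 := by
  rw [pottsOp, div_self hx, one_pow]

theorem wop_const (hq : 1 ≤ q) (k : ℕ) {a : ℝ} (ha : a ≠ 0) {x : ℕ → ℝ} (hxq : x q = 1)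
    (hx : ∑ v ∈ Icc 1 q, x v + (b - 1) * x q ≠ 0) :
    Wop q k a b (fun _ => x) = fun _ => pottsOp q k b x := by
  funext i j
  by_cases hij : i = false ∧ j = q
  · rw [Wop, if_pos hij, hij.2, pottsOp_apply_self k hx]
  have num : ∑ v ∈ Icc 1 q, (spinPow a i * x v + spinPow a (!i) * x v) +
      (b - 1) * (spinPow a i * x j + spinPow a (!i) * x j) =
      (a + a⁻¹) * (∑ v ∈ Icc 1 q, x v + (b - 1) * x j) := by
    simp only [← add_mul, ← mul_sum, spinPow_add_spinPow_not]
    ring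
  have den : ∑ v ∈ Icc 1 (q - 1), (a⁻¹ * x v + a * x v) + b * (a⁻¹ * x q + a) =
      (a + a⁻¹) * (∑ v ∈ Icc 1 q, x v + (b - 1) * x q) := by
    obtain ⟨n, rfl⟩ := Nat.exists_eq_add_of_le' hq
    simp only [← add_mul, ← mul_sum, add_tsub_cancel_right, sum_Icc_succ_top hq, hxq]
    ring
  rw [Wop, if_neg hij, num, den, mul_div_mul_left _ _ (add_inv_ne_zero ha), pottsOp]

theorem sum_Icc_update_const (hq : 1 ≤ q) (t c : ℝ) :
    ∑ v ∈ Icc 1 q, Function.update (fun _ => t) q c v = ((q : ℝ) - 1) * t + c := by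
  rw [sum_update_const_of_mem (right_mem_Icc.mpr hq), Nat.card_Icc, add_tsub_cancel_right]

theorem sum_Icc_update_const_add_mul_self (hq : 1 ≤ q) (b t : ℝ) :
    ∑ v ∈ Icc 1 q, Function.update (fun _ => t) q 1 v +
      (b - 1) * Function.update (fun _ => t) q 1 q = ((q : ℝ) - 1) * t + b := by
  rw [sum_Icc_update_const hq, Function.update_self]
  ring

theorem pottsOp_update_const (hq : 1 ≤ q) (k : ℕ) {t : ℝ} (h : ((q : ℝ) - 1) * t + b ≠ 0) :
    pottsOp q k b (Function.update (fun _ => t) q 1) =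
      Function.update
        (fun _ => ((t * (b + (q : ℝ) - 2) + 1) / (((q : ℝ) - 1) * t + b)) ^ k) q 1 := by
  have den := sum_Icc_update_const_add_mul_self hq b t
  funext j
  rcases eq_or_ne j q with rfl | hj
  · rw [Function.update_self, pottsOp_apply_self k (den.trans_ne h)]
  · have num : ((q : ℝ) - 1) * t + 1 + (b - 1) * t = t * (b + (q : ℝ) - 2) + 1 := by ring
    rw [pottsOp, den, sum_Icc_update_const hq, Function.update_of_ne hj,
      Function.update_of_ne hj, num]

end Potts

theorem iOneVec_eq_const_update (q : ℕ) (t : ℝ) :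
    iOneVec q t = fun _ => Function.update (fun _ => t) q 1 := by
  funext _ j
  rw [iOneVec, Function.update_apply]

theorem stmt1_general (q k : ℕ) (hq : 1 ≤ q) (a b : ℝ) (ha : a ≠ 0) (t : ℝ)
    (h : ((q : ℝ) - 1) * t + b ≠ 0) :
    Wop q k a b (iOneVec q t) =
      iOneVec q (((t * (b + (q : ℝ) - 2) + 1) / (((q : ℝ) - 1) * t + b)) ^ k) := by
  rw [iOneVec_eq_const_update, iOneVec_eq_const_update,
    wop_const hq k ha (Function.update_self ..)
      ((sum_Icc_update_const_add_mul_self hq b t).trans_ne h),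
    pottsOp_update_const hq k h]

/-- for `q ≥ 3`, `k ≥ 1`, `a, b > 0` and every `t > 0`, the
operator `W` maps the `I₁`-vector with parameter `t` to the `I₁`-vector with
parameter `t' = ((t(b+q-2)+1)/((q-1)t+b))^k`; in particular `I₁` is
invariant under `W`. -/
theorem stmt1 (q k : ℕ) (hq : 3 ≤ q) (hk : 1 ≤ k)
    (a b : ℝ) (ha : 0 < a) (hb : 0 < b) :
    ∀ t : ℝ, 0 < t →
      Wop q k a b (iOneVec q t) =
        iOneVec q (((t * (b + (q : ℝ) - 2) + 1) / (((q : ℝ) - 1) * t + b)) ^ k) := by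
  have hq₁ : (1 : ℝ) < q := Nat.one_lt_cast.mpr (by omega)
  exact fun t ht => stmt1_general q k (by omega) a b ha.ne' t
    (add_pos (mul_pos (sub_pos.mpr hq₁) ht) hb).ne'
end

section
/- Let q ≥ 3 and k ≥ 2 be integers and let b > 0 be real. Set b_c = (√((q−2)²(k−1)² + 4(q−1)(k+1)²) − (q−2)(k−1))/(2(k−1)). If b ≤ b_c, then the equation z = ((z(b+q−2)+1)/((q−1)z+b))^k has exactly one positive solution (namely z = 1). -/
/-!
Taking logarithms, the positive fixed points of `z ↦ ((az + b)/(cz + d)) ^ κ` are the zeros of the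
defect `log z - κ (log (az + b) - log (cz + d))`. In the variable `log z`, the slope of
`log ((az + b)/(cz + d))` lies between `0` and `(√(ad) - √(bc))/(√(ad) + √(bc))`, and can reach the
latter only at the point where `√(ac) z = √(bd)`. If `κ` times this bound is at most `1`, the defect
is strictly increasing, so there is at most one fixed point. For the equation at hand, `b ≤ b_c`
says exactly that `κ` times the bound is at most `1`.
-/

open Real Set

theorem strictMonoOn_of_deriv_pos_of_ne {D : Set ℝ} (hD : Convex ℝ D) {f : ℝ → ℝ}
    (hf : ContinuousOn f D) (c : ℝ) (hf' : ∀ x ∈ interior D, x ≠ c → 0 < deriv f x) :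
    StrictMonoOn f D := by
  have hleft : StrictMonoOn f (D ∩ Iic c) := by
    refine strictMonoOn_of_deriv_pos (hD.inter (convex_Iic c)) (hf.mono inter_subset_left) ?_
    rw [interior_inter, interior_Iic]
    exact fun x hx => hf' x hx.1 (ne_of_lt hx.2)
  have hright : StrictMonoOn f (D ∩ Ici c) := by
    refine strictMonoOn_of_deriv_pos (hD.inter (convex_Ici c)) (hf.mono inter_subset_left) ?_
    rw [interior_inter, interior_Ici]
    exact fun x hx => hf' x hx.1 (ne_of_gt hx.2)
  intro x hx y hy hxy
  rcases le_or_gt y c with hyc | hcy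
  · exact hleft ⟨hx, hxy.le.trans hyc⟩ ⟨hy, hyc⟩ hxy
  rcases le_or_gt c x with hcx | hxc
  · exact hright ⟨hx, hcx⟩ ⟨hy, hcx.trans hxy.le⟩ hxy
  have hc : c ∈ D := hD.ordConnected.out hx hy ⟨hxc.le, hcy.le⟩
  exact (hleft ⟨hx, hxc.le⟩ ⟨hc, self_mem_Iic⟩ hxc).trans
    (hright ⟨hc, self_mem_Ici⟩ ⟨hy, hcy.le⟩ hcy)

/-- The logarithmic defect `log z - log (((az + b)/(cz + d)) ^ κ)` of the fixed-point equation
`z = ((az + b)/(cz + d)) ^ κ`, with the logarithm of the power expanded so that it is easy to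
differentiate. It has this meaning only where `z`, `az + b` and `cz + d` are positive. -/
noncomputable def logDefect (a b c d κ z : ℝ) : ℝ :=
  log z - κ * (log (a * z + b) - log (c * z + d))

section LogDefect

variable {a b c d κ z : ℝ}

theorem logDefect_eq_zero_iff (hz : 0 < z) (hnum : 0 < a * z + b) (hden : 0 < c * z + d) :
    logDefect a b c d κ z = 0 ↔ z = ((a * z + b) / (c * z + d)) ^ κ := by
  have hquot : 0 < (a * z + b) / (c * z + d) := div_pos hnum hden
  rw [logDefect, ← log_div hnum.ne' hden.ne', ← log_rpow hquot, sub_eq_zero]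
  exact log_injOn_pos.eq_iff hz (rpow_pos_of_pos hquot κ)

theorem hasDerivAt_logDefect (hz : z ≠ 0) (hnum : a * z + b ≠ 0) (hden : c * z + d ≠ 0) :
    HasDerivAt (logDefect a b c d κ)
      (((a * z + b) * (c * z + d) - κ * (a * d - b * c) * z) /
        (z * ((a * z + b) * (c * z + d)))) z := by
  have hasDerivAt_affine (m n : ℝ) : HasDerivAt (fun x : ℝ => m * x + n) m z := by
    simpa only [id, mul_one] using ((hasDerivAt_id z).const_mul m).add_const n
  refine ((hasDerivAt_log hz).sub ((((hasDerivAt_affine a b).log hnum).sub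
    ((hasDerivAt_affine c d).log hden)).const_mul κ)).congr_deriv ?_
  rw [← one_div, div_sub_div _ _ hnum hden, mul_div_assoc',
    div_sub_div _ _ hz (mul_ne_zero hnum hden)]
  congr 1
  ring

theorem logDefect_numerator_eq (ha : 0 ≤ a) (hb : 0 ≤ b) (hc : 0 ≤ c) (hd : 0 ≤ d) :
    (a * z + b) * (c * z + d) - κ * (a * d - b * c) * z =
      (√(a * c) * z - √(b * d)) ^ 2 +
        (√(a * d) + √(b * c)) * (√(a * d) + √(b * c) - κ * (√(a * d) - √(b * c))) * z := by
  simp only [sqrt_mul ha, sqrt_mul hb]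
  conv_lhs => rw [← sq_sqrt ha, ← sq_sqrt hb, ← sq_sqrt hc, ← sq_sqrt hd]
  ring

theorem strictMonoOn_logDefect (ha : 0 ≤ a) (hb : 0 < b) (hc : 0 ≤ c) (hd : 0 < d)
    (hκ : κ * (√(a * d) - √(b * c)) ≤ √(a * d) + √(b * c)) :
    StrictMonoOn (logDefect a b c d κ) (Ioi 0) := by
  have hderiv (z : ℝ) (hz : 0 < z) := hasDerivAt_logDefect (κ := κ) hz.ne'
    (show a * z + b ≠ 0 by positivity) (show c * z + d ≠ 0 by positivity)
  refine strictMonoOn_of_deriv_pos_of_ne (convex_Ioi 0)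
    (fun z hz => (hderiv z hz).continuousAt.continuousWithinAt) (√(b * d) / √(a * c)) ?_
  rw [interior_Ioi]
  intro z (hz : 0 < z) hne
  have hroot : √(a * c) * z - √(b * d) ≠ 0 := by
    intro h
    have hmul : z * √(a * c) = √(b * d) := by linarith
    have hbd : z * √(a * c) ≠ 0 := by rw [hmul]; positivity
    exact hne (eq_div_of_mul_eq (right_ne_zero_of_mul hbd) hmul)
  rw [(hderiv z hz).deriv, logDefect_numerator_eq ha hb.le hc hd.le]
  have hgap : 0 ≤ √(a * d) + √(b * c) - κ * (√(a * d) - √(b * c)) := sub_nonneg.2 hκ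
  refine div_pos (add_pos_of_pos_of_nonneg (sq_pos_of_ne_zero hroot) ?_) (by positivity)
  exact mul_nonneg (mul_nonneg (by positivity) hgap) hz.le

theorem eq_mobius_rpow_iff_eq_one (ha : 0 ≤ a) (hb : 0 < b) (hc : 0 ≤ c) (hd : 0 < d)
    (hone : a + b = c + d) (hκ : κ * (√(a * d) - √(b * c)) ≤ √(a * d) + √(b * c)) (hz : 0 < z) :
    z = ((a * z + b) / (c * z + d)) ^ κ ↔ z = 1 := by
  have hzero : logDefect a b c d κ 1 = 0 := by simp [logDefect, hone]
  rw [← logDefect_eq_zero_iff hz (by positivity) (by positivity), ← hzero]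
  exact (strictMonoOn_logDefect ha hb hc hd hκ).injOn.eq_iff hz (mem_Ioi.2 one_pos)

end LogDefect

theorem mul_sqrt_sub_sqrt_le {κ x y : ℝ} (hκ : -1 ≤ κ)
    (h : (κ - 1) ^ 2 * x ≤ (κ + 1) ^ 2 * y) : κ * (√x - √y) ≤ √x + √y := by
  have hscaled : (κ - 1) * √x ≤ (κ + 1) * √y :=
    calc (κ - 1) * √x ≤ |κ - 1| * √x := by gcongr; exact le_abs_self _
      _ = √((κ - 1) ^ 2 * x) := by rw [sqrt_mul (sq_nonneg _), sqrt_sq_eq_abs]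
      _ ≤ √((κ + 1) ^ 2 * y) := sqrt_le_sqrt h
      _ = (κ + 1) * √y := by rw [sqrt_mul (sq_nonneg _), sqrt_sq (by linarith)]
  linarith

/-- The critical value `b_c` of the parameter `b`, for a real number `q` of Potts states and a
real exponent `κ` in place of the order of the tree. It is meaningful only for `κ > 1`. -/
noncomputable def criticalB (q κ : ℝ) : ℝ :=
  (√((q - 2) ^ 2 * (κ - 1) ^ 2 + 4 * (q - 1) * (κ + 1) ^ 2) - (q - 2) * (κ - 1)) / (2 * (κ - 1))

theorem le_criticalB_iff {q κ b : ℝ} (hκ : 1 < κ) (hb : 0 < b) (hbq : 0 ≤ b + q - 2) :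
    b ≤ criticalB q κ ↔ (κ - 1) ^ 2 * ((b + q - 2) * b) ≤ (κ + 1) ^ 2 * (q - 1) := by
  have hκ' : 0 < κ - 1 := sub_pos.2 hκ
  have hpos : 0 < b * (2 * (κ - 1)) + (q - 2) * (κ - 1) := by
    have hfactor : 0 < (b + (b + q - 2)) * (κ - 1) := mul_pos (by linarith) hκ'
    linarith
  rw [criticalB, le_div_iff₀ (mul_pos two_pos hκ'), le_sub_iff_add_le, le_sqrt' hpos]
  constructor <;> intro h <;> linarith

theorem stmt4_general {q κ b z : ℝ} (hκ : 1 < κ) (hb : 0 < b) (hbq : 0 ≤ b + q - 2)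
    (hbc : b ≤ criticalB q κ) (hz : 0 < z) :
    z = ((z * (b + q - 2) + 1) / ((q - 1) * z + b)) ^ κ ↔ z = 1 := by
  have hquad := (le_criticalB_iff hκ hb hbq).1 hbc
  have hq : 0 ≤ q - 1 := by
    have hprod : 0 ≤ (κ + 1) ^ 2 * (q - 1) := le_trans (by positivity) hquad
    exact nonneg_of_mul_nonneg_right hprod (by positivity)
  rw [mul_comm z]
  refine eq_mobius_rpow_iff_eq_one hbq one_pos hq hb (by ring) ?_ hz
  rw [one_mul]
  exact mul_sqrt_sub_sqrt_le (by linarith) hquad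

/-- for `q ≥ 3`, `k ≥ 2` and `0 < b ≤ b_c`, where
`b_c = (√((q-2)²(k-1)² + 4(q-1)(k+1)²) − (q-2)(k-1))/(2(k-1))`, the
translation-invariant fixed-point equation of the (2,q)-Ising-Potts model on
the invariant set `I₁` has exactly one positive solution, namely `z = 1`
(absence of a phase transition coming from `I₁`). -/
theorem stmt4 (q k : ℕ) (hq : 3 ≤ q) (hk : 2 ≤ k) (b : ℝ) (hb : 0 < b)
    (hbc : b ≤ (Real.sqrt (((q : ℝ) - 2) ^ 2 * ((k : ℝ) - 1) ^ 2 +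
        4 * ((q : ℝ) - 1) * ((k : ℝ) + 1) ^ 2) - ((q : ℝ) - 2) * ((k : ℝ) - 1)) /
        (2 * ((k : ℝ) - 1))) :
    ∀ z : ℝ, 0 < z →
      (z = ((z * (b + (q : ℝ) - 2) + 1) / (((q : ℝ) - 1) * z + b)) ^ k ↔ z = 1) := by
  intro z hz
  have hq' : (3 : ℝ) ≤ q := mod_cast hq
  have hk' : (1 : ℝ) < k := mod_cast hk
  rw [← rpow_natCast]
  exact stmt4_general hk' hb (by linarith) hbc hz
end

section
/- Let q ≥ 3 and k ≥ 2 be integers and let b > b_c, where b_c = (√((q−2)²(k−1)² + 4(q−1)(k+1)²) − (q−2)(k−1))/(2(k−1)). Set A = (q−1)^k/(b+q−2)^{k+1} and B = b(b+q−2)/(q−1). Then: (i) the quadratic equation x² + (2 − (B−1)(k−1))x + B = 0 has two distinct positive real roots x₁ < x₂; (ii) setting ηᵢ = (1/xᵢ)((1+xᵢ)/(B+xᵢ))^k for i = 1,2, one has η₁ ≠ η₂, and if A lies strictly between η₁ and η₂ then the equation A·x = ((1+x)/(B+x))^k has exactly three distinct positive solutions, while if A = η₁ or A = η₂ then it has exactly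 two distinct positive solutions. -/
/-!
A positive `x` solves `A * x = ((1 + x) / (B + x)) ^ k` exactly when `A` is the value at `x` of
`η(x) = (1 / x) * ((1 + x) / (B + x)) ^ k`. The derivative of `η` is a negative multiple of the
quadratic in the theorem, and the quadratic has two positive roots `x₁ < x₂` once `B` exceeds
`((k + 1) / (k - 1)) ^ 2`. Hence `η` falls from `+∞` to `η(x₁)`, rises to `η(x₂)` and falls to `0`,
so each of the three branches takes a level strictly between `η(x₁)` and `η(x₂)` once, and at an
extreme level two of these solutions merge. Finally, `b_c` is the positive root of
`b * (b + q - 2) / (q - 1) = ((k + 1) / (k - 1)) ^ 2`.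
-/

open Set Filter Topology

/-- A function on `(a, ∞)` that strictly decreases up to `x₁`, strictly increases on `[x₁, x₂]` and
strictly decreases from `x₂` on. It is used to count solutions of `f x = c`; the last two fields
make each outer branch cover every level strictly between the local extrema. -/
structure IsDownUpDown {α β : Type*} [LinearOrder α] [TopologicalSpace α] [LinearOrder β]
    [TopologicalSpace β] (f : α → β) (a x₁ x₂ : α) : Prop where
  left_lt : a < x₁
  lt : x₁ < x₂
  continuousOn : ContinuousOn f (Ioi a)
  strictAntiOn_left : StrictAntiOn f (Ioc a x₁)
  strictMonoOn : StrictMonoOn f (Icc x₁ x₂)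
  strictAntiOn_right : StrictAntiOn f (Ici x₂)
  exists_lt_left : ∃ y ∈ Ioo a x₁, f x₂ < f y
  exists_right_lt : ∃ z ∈ Ioi x₂, f z < f x₁

namespace IsDownUpDown

section Order

variable {α β : Type*} [LinearOrder α] [TopologicalSpace α] [LinearOrder β] [TopologicalSpace β]
  {f : α → β} {a x₁ x₂ u v w : α} {c : β}

theorem apply_lt_apply (h : IsDownUpDown f a x₁ x₂) : f x₁ < f x₂ :=
  h.strictMonoOn (left_mem_Icc.2 h.lt.le) (right_mem_Icc.2 h.lt.le) h.lt

-- The points `u`, `v`, `w` may coincide, which covers the extreme levels as well.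
theorem setOf_eq (h : IsDownUpDown f a x₁ x₂) (hu : u ∈ Ioc a x₁) (hv : v ∈ Icc x₁ x₂)
    (hw : w ∈ Ici x₂) (hfu : f u = c) (hfv : f v = c) (hfw : f w = c) :
    {x | a < x ∧ f x = c} = {u, v, w} := by
  ext x
  simp only [mem_ofPred_eq, mem_insert_iff, mem_singleton_iff]
  constructor
  · rintro ⟨hax, hx⟩
    rcases le_total x x₁ with hx₁ | hx₁
    · exact .inl (h.strictAntiOn_left.injOn ⟨hax, hx₁⟩ hu (hx.trans hfu.symm))
    rcases le_total x x₂ with hx₂ | hx₂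
    · exact .inr (.inl (h.strictMonoOn.injOn ⟨hx₁, hx₂⟩ hv (hx.trans hfv.symm)))
    · exact .inr (.inr (h.strictAntiOn_right.injOn hx₂ hw (hx.trans hfw.symm)))
  · rintro (rfl | rfl | rfl)
    · exact ⟨hu.1, hfu⟩
    · exact ⟨h.left_lt.trans_le hv.1, hfv⟩
    · exact ⟨(h.left_lt.trans h.lt).trans_le hw, hfw⟩

end Order

section IntermediateValue

variable {α β : Type*} [ConditionallyCompleteLinearOrder α] [TopologicalSpace α] [OrderTopology α]
  [DenselyOrdered α] [LinearOrder β] [TopologicalSpace β] [OrderClosedTopology β]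
  {f : α → β} {a x₁ x₂ : α} {c : β}

theorem exists_eq_left (h : IsDownUpDown f a x₁ x₂) (hc : c ∈ Ioc (f x₁) (f x₂)) :
    ∃ u ∈ Ioo a x₁, f u = c := by
  obtain ⟨y, hy, hfy⟩ := h.exists_lt_left
  obtain ⟨u, hu, hfu⟩ := intermediate_value_Ioo' hy.2.le
    (h.continuousOn.mono fun _ ht => hy.1.trans_le ht.1) ⟨hc.1, hc.2.trans_lt hfy⟩
  exact ⟨u, ⟨hy.1.trans hu.1, hu.2⟩, hfu⟩

theorem exists_eq_middle (h : IsDownUpDown f a x₁ x₂) (hc : c ∈ Ioo (f x₁) (f x₂)) :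
    ∃ v ∈ Ioo x₁ x₂, f v = c :=
  intermediate_value_Ioo h.lt.le (h.continuousOn.mono fun _ ht => h.left_lt.trans_le ht.1) hc

theorem exists_eq_right (h : IsDownUpDown f a x₁ x₂) (hc : c ∈ Ico (f x₁) (f x₂)) :
    ∃ w ∈ Ioi x₂, f w = c := by
  obtain ⟨z, hz, hfz⟩ := h.exists_right_lt
  obtain ⟨w, hw, hfw⟩ := intermediate_value_Ioo' (le_of_lt hz)
    (h.continuousOn.mono fun _ ht => (h.left_lt.trans h.lt).trans_le ht.1)
    ⟨hfz.trans_le hc.1, hc.2⟩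
  exact ⟨w, hw.1, hfw⟩

theorem ncard_eq_three (h : IsDownUpDown f a x₁ x₂) (hc : c ∈ Ioo (f x₁) (f x₂)) :
    {x | a < x ∧ f x = c}.ncard = 3 := by
  obtain ⟨u, hu, hfu⟩ := h.exists_eq_left (Ioo_subset_Ioc_self hc)
  obtain ⟨v, hv, hfv⟩ := h.exists_eq_middle hc
  obtain ⟨w, hw, hfw⟩ := h.exists_eq_right (Ioo_subset_Ico_self hc)
  rw [h.setOf_eq (Ioo_subset_Ioc_self hu) (Ioo_subset_Icc_self hv) (Ioi_subset_Ici_self hw)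
    hfu hfv hfw, Set.ncard_eq_three]
  have huv : u < v := hu.2.trans hv.1
  have hvw : v < w := hv.2.trans hw
  exact ⟨u, v, w, huv.ne, (huv.trans hvw).ne, hvw.ne, rfl⟩

theorem ncard_eq_two_left (h : IsDownUpDown f a x₁ x₂) :
    {x | a < x ∧ f x = f x₁}.ncard = 2 := by
  obtain ⟨w, hw, hfw⟩ := h.exists_eq_right (left_mem_Ico.2 h.apply_lt_apply)
  rw [h.setOf_eq (right_mem_Ioc.2 h.left_lt) (left_mem_Icc.2 h.lt.le) (Ioi_subset_Ici_self hw)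
    rfl rfl hfw, insert_eq_of_mem (mem_insert _ _), ncard_pair (h.lt.trans hw).ne]

theorem ncard_eq_two_right (h : IsDownUpDown f a x₁ x₂) :
    {x | a < x ∧ f x = f x₂}.ncard = 2 := by
  obtain ⟨u, hu, hfu⟩ := h.exists_eq_left (right_mem_Ioc.2 h.apply_lt_apply)
  rw [h.setOf_eq (Ioo_subset_Ioc_self hu) (right_mem_Icc.2 h.lt.le) self_mem_Ici hfu rfl rfl,
    pair_eq_singleton, ncard_pair (hu.2.trans h.lt).ne]

end IntermediateValue

theorem of_hasDerivAt {f g : ℝ → ℝ} {a x₁ x₂ : ℝ} (hax₁ : a < x₁) (hx₁₂ : x₁ < x₂)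
    (hf : ∀ x > a, HasDerivAt f (-((x - x₁) * (x - x₂)) * g x) x) (hg : ∀ x > a, 0 < g x)
    (hleft : ∃ y ∈ Ioo a x₁, f x₂ < f y) (hright : ∃ z ∈ Ioi x₂, f z < f x₁) :
    IsDownUpDown f a x₁ x₂ := by
  have hcont : ContinuousOn f (Ioi a) := fun x hx => (hf x hx).continuousAt.continuousWithinAt
  refine ⟨hax₁, hx₁₂, hcont, ?_, ?_, ?_, hleft, hright⟩
  · refine strictAntiOn_of_deriv_neg (convex_Ioc a x₁) (hcont.mono Ioc_subset_Ioi_self)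
      fun x hx => ?_
    obtain ⟨hax, hxx₁⟩ : x ∈ Ioo a x₁ := by rwa [interior_Ioc] at hx
    rw [(hf x hax).deriv]
    exact mul_neg_of_neg_of_pos (neg_neg_of_pos <|
      mul_pos_of_neg_of_neg (sub_neg.2 hxx₁) (sub_neg.2 (hxx₁.trans hx₁₂))) (hg x hax)
  · refine strictMonoOn_of_deriv_pos (convex_Icc x₁ x₂)
      (hcont.mono fun _ ht => hax₁.trans_le ht.1) fun x hx => ?_
    obtain ⟨hx₁x, hxx₂⟩ : x ∈ Ioo x₁ x₂ := by rwa [interior_Icc] at hx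
    have hax : a < x := hax₁.trans hx₁x
    rw [(hf x hax).deriv]
    exact mul_pos (neg_pos.2 <|
      mul_neg_of_pos_of_neg (sub_pos.2 hx₁x) (sub_neg.2 hxx₂)) (hg x hax)
  · refine strictAntiOn_of_deriv_neg (convex_Ici x₂)
      (hcont.mono fun _ ht => (hax₁.trans hx₁₂).trans_le ht) fun x hx => ?_
    have hx₂x : x₂ < x := by rwa [interior_Ici] at hx
    have hax : a < x := (hax₁.trans hx₁₂).trans hx₂x
    rw [(hf x hax).deriv]
    exact mul_neg_of_neg_of_pos (neg_neg_of_pos <|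
      mul_pos (sub_pos.2 (hx₁₂.trans hx₂x)) (sub_pos.2 hx₂x)) (hg x hax)

end IsDownUpDown

/-- The function `η` of the paper: the value of `A` for which a given `x > 0` solves
`A * x = ((1 + x) / (B + x)) ^ k`. The exponent is real. -/
noncomputable def solutionLevel (B k x : ℝ) : ℝ :=
  (1 / x) * ((1 + x) / (B + x)) ^ k

section SolutionLevel

variable {A B k x x₁ x₂ : ℝ}

theorem solutionLevel_eq_iff (hx : 0 < x) :
    solutionLevel B k x = A ↔ A * x = ((1 + x) / (B + x)) ^ k := by
  rw [solutionLevel, one_div_mul_eq_div, div_eq_iff hx.ne', eq_comm]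

theorem solutionLevel_pos (hB : 0 ≤ B) (hx : 0 < x) : 0 < solutionLevel B k x := by
  unfold solutionLevel
  positivity

theorem hasDerivAt_solutionLevel (hB : 0 ≤ B) (hx : 0 < x) :
    HasDerivAt (solutionLevel B k)
      (-(x ^ 2 + (2 - (B - 1) * (k - 1)) * x + B) *
        (((1 + x) / (B + x)) ^ (k - 1) / (x ^ 2 * (B + x) ^ 2))) x := by
  have hBx : B + x ≠ 0 := by positivity
  have hratio_pos : 0 < (1 + x) / (B + x) := by positivity
  have hinv : HasDerivAt (fun x : ℝ => 1 / x) (-(x ^ 2)⁻¹) x := by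
    simpa only [one_div] using hasDerivAt_inv hx.ne'
  have hratio : HasDerivAt (fun x : ℝ => (1 + x) / (B + x))
      ((1 * (B + x) - (1 + x) * 1) / (B + x) ^ 2) x :=
    ((hasDerivAt_id x).const_add 1).div ((hasDerivAt_id x).const_add B) hBx
  have hpow : ((1 + x) / (B + x)) ^ k =
      ((1 + x) / (B + x)) ^ (k - 1) * ((1 + x) / (B + x)) := by
    rw [← Real.rpow_add_one hratio_pos.ne', sub_add_cancel]
  refine (hinv.mul (hratio.rpow_const (p := k) (.inl hratio_pos.ne'))).congr_deriv ?_
  rw [hpow]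
  generalize ((1 + x) / (B + x)) ^ (k - 1) = P
  field_simp
  ring

theorem tendsto_solutionLevel_nhdsGT_zero (hB : 0 < B) :
    Tendsto (solutionLevel B k) (𝓝[>] 0) atTop := by
  have hratio : ContinuousAt (fun x : ℝ => (1 + x) / (B + x)) 0 :=
    (continuousAt_const.add continuousAt_id).div (continuousAt_const.add continuousAt_id)
      (by simpa only [id, add_zero] using hB.ne')
  have hratio_pos : 0 < (1 + (0 : ℝ)) / (B + 0) := by positivity
  have hpow : Tendsto (fun x : ℝ => ((1 + x) / (B + x)) ^ k) (𝓝[>] 0)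
      (𝓝 (((1 + 0) / (B + 0)) ^ k)) :=
    (hratio.rpow_const (.inl hratio_pos.ne')).tendsto.mono_left nhdsWithin_le_nhds
  unfold solutionLevel
  simpa only [one_div] using
    tendsto_inv_nhdsGT_zero.atTop_mul_pos (Real.rpow_pos_of_pos hratio_pos k) hpow

theorem tendsto_solutionLevel_atTop : Tendsto (solutionLevel B k) atTop (𝓝 0) := by
  have hshift : Tendsto (fun x : ℝ => B + x) atTop atTop :=
    tendsto_atTop_add_const_left _ B tendsto_id
  have hratio : Tendsto (fun x : ℝ => (1 + x) / (B + x)) atTop (𝓝 1) := by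
    have hsum : Tendsto (fun x : ℝ => 1 + (1 - B) / (B + x)) atTop (𝓝 1) := by
      simpa only [add_zero] using (hshift.const_div_atTop (1 - B)).const_add 1
    refine hsum.congr' ?_
    filter_upwards [hshift.eventually_gt_atTop 0] with x hx
    rw [one_add_div hx.ne']
    ring
  have hpow := hratio.rpow_const (p := k) (.inl one_ne_zero)
  unfold solutionLevel
  simpa only [one_div, zero_mul] using tendsto_inv_atTop_zero.mul hpow

theorem isDownUpDown_solutionLevel (hB : 0 < B) (hx₁ : 0 < x₁) (hx₁₂ : x₁ < x₂)
    (hfactor : ∀ x, x ^ 2 + (2 - (B - 1) * (k - 1)) * x + B = (x - x₁) * (x - x₂)) :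
    IsDownUpDown (solutionLevel B k) 0 x₁ x₂ := by
  have hleft : ∃ y ∈ Ioo 0 x₁, solutionLevel B k x₂ < solutionLevel B k y :=
    (((tendsto_solutionLevel_nhdsGT_zero hB).eventually_gt_atTop _).and
      (Ioo_mem_nhdsGT hx₁)).exists.imp fun _ => And.symm
  have hright : ∃ z ∈ Ioi x₂, solutionLevel B k z < solutionLevel B k x₁ :=
    ((eventually_gt_atTop x₂).and
      (tendsto_solutionLevel_atTop.eventually_lt_const (solutionLevel_pos hB.le hx₁))).exists
  refine .of_hasDerivAt hx₁ hx₁₂ (fun x hx => ?_) (fun x hx => ?_) hleft hright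
    (g := fun x => ((1 + x) / (B + x)) ^ (k - 1) / (x ^ 2 * (B + x) ^ 2))
  · rw [← hfactor]
    exact hasDerivAt_solutionLevel hB.le hx
  · have : 0 < x := hx
    positivity

end SolutionLevel

theorem exists_pos_factorization_of_discrim_pos {p r : ℝ} (hp : 0 < p) (hr : 0 < r)
    (hd : 4 * r < p ^ 2) :
    ∃ x₁ x₂ : ℝ, 0 < x₁ ∧ x₁ < x₂ ∧ ∀ x, x ^ 2 - p * x + r = (x - x₁) * (x - x₂) := by
  set s := √(p ^ 2 - 4 * r)
  have hs : 0 < s := Real.sqrt_pos.2 (sub_pos.2 hd)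
  have hsp : s < p := (Real.sqrt_lt' hp).2 (by linarith)
  have hsq : s ^ 2 = p ^ 2 - 4 * r := Real.sq_sqrt (sub_pos.2 hd).le
  refine ⟨(p - s) / 2, (p + s) / 2, by linarith, by linarith, fun x => ?_⟩
  linear_combination (1 / 4) * hsq

theorem exists_pos_criticalPoints {B k : ℝ} (hk : 1 < k) (hB : ((k + 1) / (k - 1)) ^ 2 < B) :
    ∃ x₁ x₂ : ℝ, 0 < x₁ ∧ x₁ < x₂ ∧
      ∀ x, x ^ 2 + (2 - (B - 1) * (k - 1)) * x + B = (x - x₁) * (x - x₂) := by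
  have hk' : 0 < k - 1 := sub_pos.2 hk
  have hB0 : 0 < B := (sq_nonneg _).trans_lt hB
  have hsq : √B ^ 2 = B := Real.sq_sqrt hB0.le
  have hsqrt : 2 < (√B - 1) * (k - 1) := by
    have : k + 1 < √B * (k - 1) := (div_lt_iff₀ hk').1 (Real.lt_sqrt_of_sq_lt hB)
    linarith
  have hp : 2 * √B < (B - 1) * (k - 1) - 2 :=
    calc 2 * √B = 2 * (√B + 1) - 2 := by ring
      _ < (√B - 1) * (k - 1) * (√B + 1) - 2 := by gcongr
      _ = (B - 1) * (k - 1) - 2 := by linear_combination (k - 1) * hsq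
  have hd : 4 * B < ((B - 1) * (k - 1) - 2) ^ 2 :=
    calc 4 * B = (2 * √B) ^ 2 := by rw [mul_pow, hsq]; norm_num
      _ < ((B - 1) * (k - 1) - 2) ^ 2 := by gcongr
  obtain ⟨x₁, x₂, hx₁, hx₁₂, hfactor⟩ :=
    exists_pos_factorization_of_discrim_pos ((by positivity : 0 ≤ 2 * √B).trans_lt hp) hB0 hd
  exact ⟨x₁, x₂, hx₁, hx₁₂, fun x => by rw [← hfactor]; ring⟩

/-- The critical parameter `b_c` of the paper, for real `q` and `k`: above it the quadratic
governing the monotonicity of `solutionLevel` has two positive roots. -/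
noncomputable def criticalParameter (q k : ℝ) : ℝ :=
  (√((q - 2) ^ 2 * (k - 1) ^ 2 + 4 * (q - 1) * (k + 1) ^ 2) - (q - 2) * (k - 1)) / (2 * (k - 1))

section CriticalParameter

variable {q k b : ℝ}

theorem criticalParameter_pos (hq : 1 < q) (hk : 1 < k) : 0 < criticalParameter q k := by
  have : 0 < q - 1 := sub_pos.2 hq
  have : 0 < k - 1 := sub_pos.2 hk
  refine div_pos (sub_pos.2 (Real.lt_sqrt_of_sq_lt ?_)) (by positivity)
  rw [mul_pow]
  exact lt_add_of_pos_right _ (by positivity)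

theorem criticalParameter_mul_add (hq : 1 ≤ q) (hk : 1 < k) :
    criticalParameter q k * (criticalParameter q k + q - 2) =
      ((k + 1) / (k - 1)) ^ 2 * (q - 1) := by
  have : 0 ≤ q - 1 := sub_nonneg.2 hq
  have hk' : k - 1 ≠ 0 := (sub_pos.2 hk).ne'
  unfold criticalParameter
  set D := (q - 2) ^ 2 * (k - 1) ^ 2 + 4 * (q - 1) * (k + 1) ^ 2 with hD
  have hsq : √D ^ 2 = D := Real.sq_sqrt (by positivity)
  field_simp
  linear_combination hsq + hD

theorem sq_lt_of_criticalParameter_lt (hq : 1 < q) (hk : 1 < k) (hb : criticalParameter q k < b) :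
    ((k + 1) / (k - 1)) ^ 2 < b * (b + q - 2) / (q - 1) := by
  have hq' : 0 < q - 1 := sub_pos.2 hq
  have : 0 < k - 1 := sub_pos.2 hk
  have hc : 0 < criticalParameter q k := criticalParameter_pos hq hk
  have hcq : 0 < criticalParameter q k + q - 2 := by
    refine pos_of_mul_pos_right ?_ hc.le
    rw [criticalParameter_mul_add hq.le hk]
    positivity
  rw [lt_div_iff₀ hq', ← criticalParameter_mul_add hq.le hk]
  gcongr

end CriticalParameter

theorem stmt5_general {k B : ℝ} (hk : 1 < k) (hB : ((k + 1) / (k - 1)) ^ 2 < B) (A : ℝ) :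
    ∃ x₁ x₂ η₁ η₂ : ℝ, 0 < x₁ ∧ x₁ < x₂ ∧
      x₁ ^ 2 + (2 - (B - 1) * (k - 1)) * x₁ + B = 0 ∧
      x₂ ^ 2 + (2 - (B - 1) * (k - 1)) * x₂ + B = 0 ∧
      η₁ = (1 / x₁) * ((1 + x₁) / (B + x₁)) ^ k ∧
      η₂ = (1 / x₂) * ((1 + x₂) / (B + x₂)) ^ k ∧
      η₁ ≠ η₂ ∧
      (min η₁ η₂ < A ∧ A < max η₁ η₂ →
        {x : ℝ | 0 < x ∧ A * x = ((1 + x) / (B + x)) ^ k}.ncard = 3) ∧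
      ((A = η₁ ∨ A = η₂) →
        {x : ℝ | 0 < x ∧ A * x = ((1 + x) / (B + x)) ^ k}.ncard = 2) := by
  obtain ⟨x₁, x₂, hx₁, hx₁₂, hfactor⟩ := exists_pos_criticalPoints hk hB
  have hshape := isDownUpDown_solutionLevel ((sq_nonneg _).trans_lt hB) hx₁ hx₁₂ hfactor
  have hset : {x : ℝ | 0 < x ∧ A * x = ((1 + x) / (B + x)) ^ k} =
      {x | 0 < x ∧ solutionLevel B k x = A} :=
    Set.ext fun x => and_congr_right fun hx => (solutionLevel_eq_iff hx).symm
  have hη := hshape.apply_lt_apply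
  refine ⟨x₁, x₂, solutionLevel B k x₁, solutionLevel B k x₂, hx₁, hx₁₂, by simp [hfactor],
    by simp [hfactor], rfl, rfl, hη.ne, ?_, ?_⟩
  · rw [hset, min_eq_left hη.le, max_eq_right hη.le]
    exact hshape.ncard_eq_three
  · rw [hset]
    rintro (rfl | rfl)
    exacts [hshape.ncard_eq_two_left, hshape.ncard_eq_two_right]

/-- for `q ≥ 3`, `k ≥ 2` and `b > b_c`, with
`A = (q-1)^k/(b+q-2)^{k+1}` and `B = b(b+q-2)/(q-1)`:
(i) the quadratic `x² + (2 − (B−1)(k−1))x + B = 0` has two distinct positive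
roots `x₁ < x₂`; (ii) with `ηᵢ = (1/xᵢ)((1+xᵢ)/(B+xᵢ))^k` one has `η₁ ≠ η₂`,
the equation `A·x = ((1+x)/(B+x))^k` has exactly three positive solutions when
`A` lies strictly between `η₁` and `η₂`, and exactly two when `A ∈ {η₁, η₂}`. -/
theorem stmt5 (q k : ℕ) (hq : 3 ≤ q) (hk : 2 ≤ k) (b : ℝ)
    (hb : b > (Real.sqrt (((q : ℝ) - 2) ^ 2 * ((k : ℝ) - 1) ^ 2 +
        4 * ((q : ℝ) - 1) * ((k : ℝ) + 1) ^ 2) - ((q : ℝ) - 2) * ((k : ℝ) - 1)) /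
        (2 * ((k : ℝ) - 1)))
    (A B : ℝ)
    (hA : A = ((q : ℝ) - 1) ^ k / (b + (q : ℝ) - 2) ^ (k + 1))
    (hB : B = b * (b + (q : ℝ) - 2) / ((q : ℝ) - 1)) :
    ∃ x₁ x₂ η₁ η₂ : ℝ, 0 < x₁ ∧ x₁ < x₂ ∧
      x₁ ^ 2 + (2 - (B - 1) * ((k : ℝ) - 1)) * x₁ + B = 0 ∧
      x₂ ^ 2 + (2 - (B - 1) * ((k : ℝ) - 1)) * x₂ + B = 0 ∧
      η₁ = (1 / x₁) * ((1 + x₁) / (B + x₁)) ^ k ∧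
      η₂ = (1 / x₂) * ((1 + x₂) / (B + x₂)) ^ k ∧
      η₁ ≠ η₂ ∧
      (min η₁ η₂ < A ∧ A < max η₁ η₂ →
        {x : ℝ | 0 < x ∧ A * x = ((1 + x) / (B + x)) ^ k}.ncard = 3) ∧
      ((A = η₁ ∨ A = η₂) →
        {x : ℝ | 0 < x ∧ A * x = ((1 + x) / (B + x)) ^ k}.ncard = 2) := by
  have hq' : (1 : ℝ) < q := by exact_mod_cast (by omega : 1 < q)
  have hk' : (1 : ℝ) < k := by exact_mod_cast hk
  simpa only [Real.rpow_natCast, hB] using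
    stmt5_general hk' (sq_lt_of_criticalParameter_lt hq' hk' hb) A
end

section
/- Let q ≥ 3 be an integer and b > 0 real, and consider the equation z = ((z(b+q−2)+1)/((q−1)z+b))² in z > 0. Then: (i) if b > 1 + 2√(q−1) and b ≠ q+1, the equation has exactly three distinct positive solutions; (ii) if b = 1 + 2√(q−1), it has exactly two distinct positive solutions; (iii) if 0 < b < 1 + 2√(q−1), it has exactly one positive solution, namely z = 1. -/
/-!
Put `z = x ^ 2`, where `x` is the fraction being squared. Clearing the denominator turns the
equation into the cubic `(x - 1) * ((q - 1) * x ^ 2 + (1 - b) * x + 1) = 0`, and every real root of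
it, of either sign, gives back a solution `z = x ^ 2`. The quadratic factor has discriminant
`(b - 1) ^ 2 - 4 * (q - 1)`. When it is negative only `x = 1` remains. When `b > 1` the real roots
are all positive, so that squaring is injective on them and counting solutions amounts to counting
roots.
-/

section Quadratic

variable {K : Type*} [Field K] [NeZero (2 : K)] {a b c : K}

theorem encard_setOf_quadratic_eq_zero_of_discrim_eq_mul_self (ha : a ≠ 0) {s : K} (hs : s ≠ 0)
    (h : discrim a b c = s * s) : {x : K | a * (x * x) + b * x + c = 0}.encard = 2 := by
  have roots_ne : (-b + s) / (2 * a) ≠ (-b - s) / (2 * a) := by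
    intro heq
    have hsum : 2 * s = 0 := by
      linear_combination (div_left_inj' (mul_ne_zero two_ne_zero ha)).1 heq
    exact mul_ne_zero two_ne_zero hs hsum
  have roots_eq : {x : K | a * (x * x) + b * x + c = 0} =
      {(-b + s) / (2 * a), (-b - s) / (2 * a)} :=
    Set.ext (quadratic_eq_zero_iff ha h)
  rw [roots_eq, Set.encard_pair roots_ne]

theorem encard_setOf_quadratic_eq_zero_of_discrim_eq_zero (ha : a ≠ 0)
    (h : discrim a b c = 0) : {x : K | a * (x * x) + b * x + c = 0}.encard = 1 := by
  have roots_eq : {x : K | a * (x * x) + b * x + c = 0} = {-b / (2 * a)} :=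
    Set.ext (quadratic_eq_zero_iff_of_discrim_eq_zero ha h)
  rw [roots_eq, Set.encard_singleton]

end Quadratic

/-- The positive solutions of the translation-invariant fixed-point equation on `I₁`, for a real
number `q` of Potts states. For `q ≥ 1` and `b > 0` the denominator is positive at every `z > 0`. -/
def positiveFixedPoints (q b : ℝ) : Set ℝ :=
  {z | 0 < z ∧ z = ((z * (b + q - 2) + 1) / ((q - 1) * z + b)) ^ 2}

/-- The real roots of the quadratic cofactor of the trivial root `x = 1` in the cubic satisfied by
the square root `x = ± √z` of a fixed point. -/
def cofactorRoots (q b : ℝ) : Set ℝ :=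
  {x | (q - 1) * (x * x) + (1 - b) * x + 1 = 0}

section FixedPoints

variable {q b : ℝ}

theorem sq_mem_positiveFixedPoints (hq : 1 ≤ q) (hb : 0 < b) {x : ℝ}
    (hx : x ∈ insert 1 (cofactorRoots q b)) : x ^ 2 ∈ positiveFixedPoints q b := by
  have cubic : (x - 1) * ((q - 1) * (x * x) + (1 - b) * x + 1) = 0 :=
    mul_eq_zero.2 (hx.imp_left sub_eq_zero.2)
  have hx0 : x ≠ 0 := by
    rintro rfl
    norm_num at cubic
  have denom_pos : 0 < (q - 1) * x ^ 2 + b :=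
    add_pos_of_nonneg_of_pos (mul_nonneg (sub_nonneg.2 hq) (sq_nonneg x)) hb
  refine ⟨by positivity, congrArg (· ^ 2) ?_⟩
  rw [eq_div_iff denom_pos.ne']
  linear_combination cubic

theorem exists_sq_eq_of_mem_positiveFixedPoints (hq : 1 ≤ q) (hb : 0 < b) {z : ℝ}
    (hz : z ∈ positiveFixedPoints q b) : ∃ x ∈ insert 1 (cofactorRoots q b), x ^ 2 = z := by
  obtain ⟨z_pos, z_eq⟩ := hz
  have denom_pos : 0 < (q - 1) * z + b :=
    add_pos_of_nonneg_of_pos (mul_nonneg (sub_nonneg.2 hq) z_pos.le) hb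
  set x := (z * (b + q - 2) + 1) / ((q - 1) * z + b) with x_def
  have cleared : x * ((q - 1) * z + b) = z * (b + q - 2) + 1 := (eq_div_iff denom_pos.ne').1 x_def
  have cubic : (x - 1) * ((q - 1) * (x * x) + (1 - b) * x + 1) = 0 := by
    linear_combination cleared - ((q - 1) * x - (b + q - 2)) * z_eq
  exact ⟨x, (mul_eq_zero.1 cubic).imp_left sub_eq_zero.1, z_eq.symm⟩

theorem positiveFixedPoints_eq_image_sq (hq : 1 ≤ q) (hb : 0 < b) :
    positiveFixedPoints q b = (· ^ 2) '' insert 1 (cofactorRoots q b) :=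
  Set.Subset.antisymm (fun _ => exists_sq_eq_of_mem_positiveFixedPoints hq hb)
    (Set.image_subset_iff.2 fun _ => sq_mem_positiveFixedPoints hq hb)

theorem one_mem_cofactorRoots_iff : 1 ∈ cofactorRoots q b ↔ b = q + 1 := by
  simp only [cofactorRoots, Set.mem_ofPred_eq]
  constructor <;> intro h <;> linarith

theorem cofactorRoots_subset_Ioi (hq : 1 ≤ q) (hb : 1 < b) : cofactorRoots q b ⊆ Set.Ioi 0 := by
  intro x hx
  have h : (b - 1) * x = (q - 1) * (x * x) + 1 := by linear_combination -hx.out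
  have rhs_pos : 0 < (q - 1) * (x * x) + 1 :=
    add_pos_of_nonneg_of_pos (mul_nonneg (sub_nonneg.2 hq) (mul_self_nonneg x)) one_pos
  exact pos_of_mul_pos_right (h ▸ rhs_pos) (sub_pos.2 hb).le

theorem encard_positiveFixedPoints (hq : 1 ≤ q) (hb : 1 < b) (hbq : b ≠ q + 1) :
    (positiveFixedPoints q b).encard = (cofactorRoots q b).encard + 1 := by
  have roots_pos : insert 1 (cofactorRoots q b) ⊆ Set.Ioi 0 :=
    Set.insert_subset (Set.mem_Ioi.2 one_pos) (cofactorRoots_subset_Ioi hq hb)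
  have sq_injOn : Set.InjOn (· ^ 2 : ℝ → ℝ) (insert 1 (cofactorRoots q b)) :=
    fun x hx y hy => (sq_eq_sq₀ (roots_pos hx).out.le (roots_pos hy).out.le).1
  rw [positiveFixedPoints_eq_image_sq hq (one_pos.trans hb), sq_injOn.encard_image,
    Set.encard_insert_of_notMem (one_mem_cofactorRoots_iff.not.2 hbq)]

theorem discrim_cofactor (hq : 1 ≤ q) :
    discrim (q - 1) (1 - b) 1 = (b - 1 - 2 * √(q - 1)) * (b - 1 + 2 * √(q - 1)) := by
  rw [discrim]
  linear_combination 4 * Real.sq_sqrt (sub_nonneg.2 hq)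

theorem encard_cofactorRoots_eq_two (hq : 1 < q) (hb : 1 + 2 * √(q - 1) < b) :
    (cofactorRoots q b).encard = 2 := by
  have discrim_pos : 0 < discrim (q - 1) (1 - b) 1 := by
    rw [discrim_cofactor hq.le]
    have := Real.sqrt_nonneg (q - 1)
    exact mul_pos (by linarith) (by linarith)
  exact encard_setOf_quadratic_eq_zero_of_discrim_eq_mul_self (sub_pos.2 hq).ne'
    (Real.sqrt_pos.2 discrim_pos).ne' (Real.mul_self_sqrt discrim_pos.le).symm

theorem encard_cofactorRoots_eq_one (hq : 1 < q) (hb : b = 1 + 2 * √(q - 1)) :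
    (cofactorRoots q b).encard = 1 := by
  refine encard_setOf_quadratic_eq_zero_of_discrim_eq_zero (sub_pos.2 hq).ne' ?_
  rw [discrim_cofactor hq.le, hb]
  ring

theorem cofactorRoots_eq_empty (hq : 1 ≤ q) (hb : |b - 1| < 2 * √(q - 1)) :
    cofactorRoots q b = ∅ := by
  obtain ⟨lower, upper⟩ := abs_lt.1 hb
  have discrim_neg : discrim (q - 1) (1 - b) 1 < 0 := by
    rw [discrim_cofactor hq]
    exact mul_neg_of_neg_of_pos (by linarith) (by linarith)
  refine Set.eq_empty_of_forall_notMem fun x =>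
    quadratic_ne_zero_of_discrim_ne_sq (fun s => ?_) x
  exact (discrim_neg.trans_le (sq_nonneg s)).ne

theorem one_add_two_mul_sqrt_ne (hq : 1 ≤ q) (hq2 : q ≠ 2) : 1 + 2 * √(q - 1) ≠ q + 1 := by
  intro h
  have sq_eq : √(q - 1) ^ 2 = q - 1 := Real.sq_sqrt (sub_nonneg.2 hq)
  have double_root : (√(q - 1) - 1) ^ 2 = 0 := by linear_combination sq_eq - h
  have sqrt_eq : √(q - 1) = 1 := sub_eq_zero.1 (pow_eq_zero_iff two_ne_zero |>.1 double_root)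
  exact hq2 (by linarith [Real.sqrt_eq_one.1 sqrt_eq])

theorem ncard_positiveFixedPoints_eq_three (hq : 1 < q) (hb : 1 + 2 * √(q - 1) < b)
    (hbq : b ≠ q + 1) : (positiveFixedPoints q b).ncard = 3 := by
  have one_lt_b : 1 < b := by linarith [Real.sqrt_nonneg (q - 1)]
  rw [Set.ncard, encard_positiveFixedPoints hq.le one_lt_b hbq, encard_cofactorRoots_eq_two hq hb]
  rfl

theorem ncard_positiveFixedPoints_eq_two (hq : 1 < q) (hq2 : q ≠ 2)
    (hb : b = 1 + 2 * √(q - 1)) : (positiveFixedPoints q b).ncard = 2 := by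
  have one_lt_b : 1 < b := by linarith [Real.sqrt_pos.2 (sub_pos.2 hq)]
  have hbq : b ≠ q + 1 := hb ▸ one_add_two_mul_sqrt_ne hq.le hq2
  rw [Set.ncard, encard_positiveFixedPoints hq.le one_lt_b hbq, encard_cofactorRoots_eq_one hq hb]
  rfl

theorem positiveFixedPoints_eq_singleton (hq : 1 ≤ q) (hb : 0 < b)
    (hbq : |b - 1| < 2 * √(q - 1)) : positiveFixedPoints q b = {1} := by
  rw [positiveFixedPoints_eq_image_sq hq hb, cofactorRoots_eq_empty hq hbq, insert_empty_eq,
    Set.image_singleton, one_pow]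

end FixedPoints

theorem stmt8_general (q : ℝ) (hq : 5 / 4 ≤ q) (hq2 : q ≠ 2) (b : ℝ) (hb : 0 < b) :
    (b > 1 + 2 * √(q - 1) → b ≠ q + 1 → (positiveFixedPoints q b).ncard = 3) ∧
    (b = 1 + 2 * √(q - 1) → (positiveFixedPoints q b).ncard = 2) ∧
    (b < 1 + 2 * √(q - 1) → positiveFixedPoints q b = {1}) := by
  have one_lt_q : 1 < q := by linarith
  refine ⟨ncard_positiveFixedPoints_eq_three one_lt_q,
    ncard_positiveFixedPoints_eq_two one_lt_q hq2, fun hlt => ?_⟩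
  -- The origin of `5 / 4`: `1 - 2 * √(q - 1) ≤ 0 < b` keeps the cofactor from having negative
  -- roots, whose squares would be further fixed points.
  have half_le_sqrt : 1 / 2 ≤ √(q - 1) := Real.le_sqrt_of_sq_le (by linarith)
  exact positiveFixedPoints_eq_singleton one_lt_q.le hb
    (abs_lt.2 ⟨by linarith, by linarith⟩)

/-- number of positive solutions of the `k = 2`
translation-invariant fixed-point equation
`z = ((z(b+q−2)+1)/((q−1)z+b))²` of the (2,q)-Ising-Potts model on the
invariant set `I₁`: three if `b > 1 + 2√(q−1)` and `b ≠ q+1`, two if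
`b = 1 + 2√(q−1)`, and exactly one (namely `z = 1`) if
`0 < b < 1 + 2√(q−1)`. -/
theorem stmt8 (q : ℕ) (hq : 3 ≤ q) (b : ℝ) (hb : 0 < b) :
    (b > 1 + 2 * Real.sqrt ((q : ℝ) - 1) → b ≠ (q : ℝ) + 1 →
      {z : ℝ | 0 < z ∧
        z = ((z * (b + (q : ℝ) - 2) + 1) / (((q : ℝ) - 1) * z + b)) ^ 2}.ncard = 3) ∧
    (b = 1 + 2 * Real.sqrt ((q : ℝ) - 1) →
      {z : ℝ | 0 < z ∧
        z = ((z * (b + (q : ℝ) - 2) + 1) / (((q : ℝ) - 1) * z + b)) ^ 2}.ncard = 2) ∧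
    (b < 1 + 2 * Real.sqrt ((q : ℝ) - 1) →
      {z : ℝ | 0 < z ∧
        z = ((z * (b + (q : ℝ) - 2) + 1) / (((q : ℝ) - 1) * z + b)) ^ 2} = {1}) :=
  have two_lt_q : (2 : ℝ) < q := Nat.ofNat_lt_cast.2 hq
  stmt8_general q (by linarith) two_lt_q.ne' b hb
end

section
/- The polynomial g₂(a) = 3a⁸ + 12a⁷ + 12a⁶ − 28a⁵ − 70a⁴ − 60a³ − 36a² − 52a − 5 has exactly one positive real root, and this root lies in the open interval (1, 2); in particular g₂(1) = −224 < 0 and g₂(2) = 323 > 0, g₂(a) < 0 for 0 < a below the root, and g₂(a) > 0 for a above the root. -/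
/-!
Dividing a polynomial whose coefficients are nonpositive below degree `k` and nonnegative above
it by `x ^ k` leaves a sum of terms `c * x ^ m` with `c * m ≥ 0`, which is increasing on the
positive axis. Such a polynomial therefore changes sign at most once there, from negative to
positive. The polynomial `g₂` is of this kind with `k = 5`, and the intermediate value theorem
on `[1, 2]` supplies the root.
-/

section SingleSignChange

open Polynomial

theorem pow_mul_pow_lt_pow_mul_pow {R : Type*} [CommSemiring R] [PartialOrder R]
    [IsStrictOrderedRing R] {a b : R} {k i : ℕ} (ha : 0 < a) (hab : a < b) (hki : k < i) :
    a ^ i * b ^ k < b ^ i * a ^ k := by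
  obtain ⟨d, rfl⟩ := Nat.exists_eq_add_of_lt hki
  have hb : 0 < b := ha.trans hab
  calc a ^ (k + d + 1) * b ^ k = a ^ k * b ^ k * a ^ (d + 1) := by ring
    _ < a ^ k * b ^ k * b ^ (d + 1) :=
      mul_lt_mul_of_pos_left (pow_lt_pow_left₀ hab ha.le d.succ_ne_zero)
        (mul_pos (pow_pos ha k) (pow_pos hb k))
    _ = b ^ (k + d + 1) * a ^ k := by ring

/-- The coefficients of `p` change sign at most once, from nonpositive to nonnegative, at degree
`k`; this is the one-variation case of Descartes' rule of signs. The coefficient of `X ^ k` is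
unconstrained, and `p` is not a scalar multiple of `X ^ k`. -/
structure SignChangeAt {R : Type*} [Semiring R] [LE R] (p : R[X]) (k : ℕ) : Prop where
  coeff_nonpos : ∀ i, i < k → p.coeff i ≤ 0
  coeff_nonneg : ∀ i, k < i → 0 ≤ p.coeff i
  exists_coeff_ne_zero : ∃ i, i ≠ k ∧ p.coeff i ≠ 0

namespace SignChangeAt

section PartialOrder

variable {R : Type*} [CommRing R] [PartialOrder R] [IsStrictOrderedRing R] {p : R[X]} {k : ℕ}
  {a b : R}

theorem coeff_mul_pow_mul_pow_lt (hp : SignChangeAt p k) (ha : 0 < a) (hab : a < b) {i : ℕ}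
    (hik : i ≠ k) (hi : p.coeff i ≠ 0) :
    p.coeff i * (a ^ i * b ^ k) < p.coeff i * (b ^ i * a ^ k) := by
  rcases hik.lt_or_gt with hlt | hgt
  · have hpow : b ^ i * a ^ k < a ^ i * b ^ k := by
      simpa only [mul_comm] using pow_mul_pow_lt_pow_mul_pow ha hab hlt
    exact mul_lt_mul_of_neg_left hpow ((hp.coeff_nonpos i hlt).lt_of_ne hi)
  · exact mul_lt_mul_of_pos_left (pow_mul_pow_lt_pow_mul_pow ha hab hgt)
      ((hp.coeff_nonneg i hgt).lt_of_ne' hi)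

/-- The cross-multiplied form of `p(a) / a ^ k < p(b) / b ^ k`. -/
theorem eval_mul_pow_lt_eval_mul_pow (hp : SignChangeAt p k) (ha : 0 < a) (hab : a < b) :
    p.eval a * b ^ k < p.eval b * a ^ k := by
  obtain ⟨j, hjk, hj⟩ := hp.exists_coeff_ne_zero
  simp only [eval_eq_sum, Polynomial.sum, Finset.sum_mul, mul_assoc]
  refine Finset.sum_lt_sum (fun i hi => ?_)
    ⟨j, mem_support_iff.mpr hj, hp.coeff_mul_pow_mul_pow_lt ha hab hjk hj⟩
  rcases eq_or_ne i k with rfl | hik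
  · rw [mul_comm (a ^ i)]
  · exact (hp.coeff_mul_pow_mul_pow_lt ha hab hik (mem_support_iff.mp hi)).le

end PartialOrder

section LinearOrder

variable {R : Type*} [CommRing R] [LinearOrder R] [IsStrictOrderedRing R] {p : R[X]} {k : ℕ}
  {a r : R}

theorem eval_neg_of_lt_root (hp : SignChangeAt p k) (hr : p.IsRoot r) (ha : 0 < a)
    (har : a < r) : p.eval a < 0 := by
  have h := hp.eval_mul_pow_lt_eval_mul_pow ha har
  rw [hr.eq_zero, zero_mul] at h
  exact neg_of_mul_neg_left h (pow_pos (ha.trans har) k).le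

theorem eval_pos_of_root_lt (hp : SignChangeAt p k) (hr : p.IsRoot r) (hr₀ : 0 < r)
    (hra : r < a) : 0 < p.eval a := by
  have h := hp.eval_mul_pow_lt_eval_mul_pow hr₀ hra
  rw [hr.eq_zero, zero_mul] at h
  exact pos_of_mul_pos_left h (pow_pos hr₀ k).le

theorem root_unique (hp : SignChangeAt p k) (hr : p.IsRoot r) (hr₀ : 0 < r) (ha : p.IsRoot a)
    (ha₀ : 0 < a) : a = r := by
  rcases lt_trichotomy a r with hlt | heq | hgt
  · exact absurd ha (hp.eval_neg_of_lt_root hr ha₀ hlt).ne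
  · exact heq
  · exact absurd ha (hp.eval_pos_of_root_lt hr hr₀ hgt).ne'

end LinearOrder

end SignChangeAt

/-- The polynomial `g₂` in the parameter `a`. Multiplied by `-(a + 1)² / 16`, it is the leading
coefficient of the second Sturm polynomial of the quartic `P_a` of the (2,3)-Ising-Potts model. -/
noncomputable def sturmLeadingCoeff : ℝ[X] :=
  3 * X ^ 8 + 12 * X ^ 7 + 12 * X ^ 6 - 28 * X ^ 5 - 70 * X ^ 4 - 60 * X ^ 3 - 36 * X ^ 2 -
    52 * X - 5

theorem eval_sturmLeadingCoeff (a : ℝ) :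
    sturmLeadingCoeff.eval a = 3 * a ^ 8 + 12 * a ^ 7 + 12 * a ^ 6 - 28 * a ^ 5 - 70 * a ^ 4 -
      60 * a ^ 3 - 36 * a ^ 2 - 52 * a - 5 := by
  simp [sturmLeadingCoeff]

theorem coeff_sturmLeadingCoeff (i : ℕ) :
    sturmLeadingCoeff.coeff i =
      match i with
      | 0 => -5 | 1 => -52 | 2 => -36 | 3 => -60 | 4 => -70 | 5 => -28
      | 6 => 12 | 7 => 12 | 8 => 3 | _ + 9 => 0 := by
  split <;> simp [sturmLeadingCoeff, coeff_X, coeff_X_pow]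

theorem signChangeAt_sturmLeadingCoeff : SignChangeAt sturmLeadingCoeff 5 where
  coeff_nonpos i hi := by
    rw [coeff_sturmLeadingCoeff]
    interval_cases i <;> norm_num
  coeff_nonneg i hi := by
    rw [coeff_sturmLeadingCoeff]
    split <;> first | omega | norm_num
  exists_coeff_ne_zero := ⟨0, by norm_num, by norm_num [coeff_sturmLeadingCoeff]⟩

theorem exists_isRoot_sturmLeadingCoeff :
    ∃ r : ℝ, 1 < r ∧ r < 2 ∧ sturmLeadingCoeff.IsRoot r := by
  have hsign : (0 : ℝ) ∈ Set.Ioo (sturmLeadingCoeff.eval 1) (sturmLeadingCoeff.eval 2) := by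
    norm_num [eval_sturmLeadingCoeff]
  obtain ⟨r, ⟨h1r, hr2⟩, hr⟩ :=
    intermediate_value_Ioo one_le_two sturmLeadingCoeff.continuousOn hsign
  exact ⟨r, h1r, hr2, hr⟩

end SingleSignChange

/-- the polynomial
`g₂(a) = 3a⁸ + 12a⁷ + 12a⁶ − 28a⁵ − 70a⁴ − 60a³ − 36a² − 52a − 5`
has exactly one positive real root, which lies in `(1, 2)`; moreover
`g₂(1) = −224`, `g₂(2) = 323`, `g₂` is negative on positive arguments below
the root and positive above it. -/
theorem stmt13 (g₂ : ℝ → ℝ)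
    (hg : ∀ a : ℝ, g₂ a = 3 * a ^ 8 + 12 * a ^ 7 + 12 * a ^ 6 - 28 * a ^ 5 -
      70 * a ^ 4 - 60 * a ^ 3 - 36 * a ^ 2 - 52 * a - 5) :
    ∃ r : ℝ, 1 < r ∧ r < 2 ∧ g₂ r = 0 ∧
      (∀ a : ℝ, 0 < a → g₂ a = 0 → a = r) ∧
      g₂ 1 = -224 ∧ g₂ 2 = 323 ∧
      (∀ a : ℝ, 0 < a → a < r → g₂ a < 0) ∧
      (∀ a : ℝ, r < a → 0 < g₂ a) := by
  have hev (a : ℝ) : g₂ a = sturmLeadingCoeff.eval a := by rw [hg, eval_sturmLeadingCoeff]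
  have hsc := signChangeAt_sturmLeadingCoeff
  obtain ⟨r, h1r, hr2, hr⟩ := exists_isRoot_sturmLeadingCoeff
  have hr₀ : 0 < r := zero_lt_one.trans h1r
  refine ⟨r, h1r, hr2, (hev r).trans hr, fun a ha₀ ha => ?_, ?_, ?_, fun a ha₀ har => ?_,
    fun a hra => ?_⟩
  · exact hsc.root_unique hr hr₀ ((hev a).symm.trans ha) ha₀
  · norm_num [hg]
  · norm_num [hg]
  · exact (hev a).trans_lt (hsc.eval_neg_of_lt_root hr ha₀ har)
  · exact (hsc.eval_pos_of_root_lt hr hr₀ hra).trans_eq (hev a).symm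
end

section
/- For a = 3/2, the quartic P_{3/2}(x) = −4(5/2)⁴x⁴ + 2·(1/2)·(5/2)⁶x³ − (5/2)²(2(3/2)⁵+5(3/2)⁴+6(3/2)³+6(3/2)²+8(3/2)+1)x² + (3/2)(3(3/2)²+4(3/2)−1)(5/2)³x − ((5/2)⁵+(3/2)²) satisfies P_{3/2}(x) < 0 for every x ≥ 0; in particular the equation P_{3/2}(x) = 0 has no nonnegative real solutions. -/
/-! Completing the square in `-P_a` with a free constant term `s` gives
`-P_a(x) = (2(a+1)²x² - (a-1)(a+1)⁴x/2 + s)² + (quadratic in x)`, so `P_a` is negative on the whole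
line as soon as the quadratic remainder is positive definite. The plain completion `s = 0` achieves
this at `a = 3/2` but not at `a = 2`; with `s = a(a²+1)` the linear coefficient of the remainder is
divisible by `a²`, and its discriminant is negative for all `0 ≤ a ≤ 2`. -/

section Quadratic

variable {K : Type*} [Field K] [LinearOrder K] [IsStrictOrderedRing K]

lemma quadratic_pos_of_discrim_neg {a b c : K} (ha : 0 < a) (h : discrim a b c < 0) (x : K) :
    0 < a * (x * x) + b * x + c := by
  have complete_square :
      4 * a * (a * (x * x) + b * x + c) = (2 * a * x + b) ^ 2 - discrim a b c := by
    rw [discrim]; ring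
  have product_pos : 0 < 4 * a * (a * (x * x) + b * x + c) := by
    rw [complete_square]
    exact sub_pos.mpr (h.trans_le (sq_nonneg _))
  exact pos_of_mul_pos_right product_pos (by positivity)

end Quadratic

/-- The quartic `P_a` obtained by elimination from the equations for translation-invariant Gibbs
measures of the (2,3)-Ising-Potts model on the binary Cayley tree. -/
def isingPottsQuartic {R : Type*} [CommRing R] (a x : R) : R :=
  -4 * (a + 1) ^ 4 * x ^ 4 + 2 * (a - 1) * (a + 1) ^ 6 * x ^ 3 -
    (a + 1) ^ 2 * (2 * a ^ 5 + 5 * a ^ 4 + 6 * a ^ 3 + 6 * a ^ 2 + 8 * a + 1) * x ^ 2 +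
    a * (3 * a ^ 2 + 4 * a - 1) * (a + 1) ^ 3 * x - ((a + 1) ^ 5 + a ^ 2)

namespace isingPottsQuartic

section Remainder

variable {R : Type*} [CommRing R]

/-- The quadratic coefficient, up to the factor `(a + 1) ^ 2`, of the remainder left when a square
is split off from `-4 * isingPottsQuartic a x`. -/
def remainderLead (a : R) : R :=
  4 * (2 * a ^ 5 + 5 * a ^ 4 + 6 * a ^ 3 + 6 * a ^ 2 + 8 * a + 1) -
    (a - 1) ^ 2 * (a + 1) ^ 6 - 16 * (a ^ 3 + a)

/-- The linear coefficient, up to the factor `-4 * (a + 1) ^ 3`, of the remainder left when a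
square is split off from `-4 * isingPottsQuartic a x`. -/
def remainderSlope (a : R) : R :=
  a ^ 2 * (4 + 3 * a - a ^ 3)

/-- The constant coefficient, up to the factor `4`, of the remainder left when a square is split
off from `-4 * isingPottsQuartic a x`. -/
def remainderConst (a : R) : R :=
  (a + 1) ^ 5 + a ^ 2 - (a ^ 3 + a) ^ 2

lemma neg_four_mul_eq_sq_add_remainder (a x : R) :
    -4 * isingPottsQuartic a x =
      (4 * (a + 1) ^ 2 * x ^ 2 - (a - 1) * (a + 1) ^ 4 * x + 2 * (a ^ 3 + a)) ^ 2 +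
        ((a + 1) ^ 2 * remainderLead a * (x * x) + -4 * (a + 1) ^ 3 * remainderSlope a * x +
          4 * remainderConst a) := by
  simp only [isingPottsQuartic, remainderLead, remainderSlope, remainderConst]
  ring

lemma discrim_remainder (a : R) :
    discrim ((a + 1) ^ 2 * remainderLead a) (-4 * (a + 1) ^ 3 * remainderSlope a)
        (4 * remainderConst a) =
      16 * (a + 1) ^ 2 *
        ((a + 1) ^ 4 * remainderSlope a ^ 2 - remainderLead a * remainderConst a) := by
  rw [discrim]; ring

end Remainder

section Bounds

variable {K : Type*} [Field K] [LinearOrder K] [IsStrictOrderedRing K] {a : K}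

-- The discriminant contains the product `remainderLead a * remainderConst a`; the linear weight
-- `5 + 2 * a` separates its factors, so that each can be bounded by itself. In both bounds,
-- division by `2 - a` leaves a quotient and a remainder whose positivity on `[0, 2]` is visible.
lemma weight_mul_le_remainderConst (ha₀ : 0 ≤ a) (ha₂ : a ≤ 2) :
    (5 + 2 * a) * (a + 1) ^ 4 ≤ 5 * remainderConst a := by
  have gap_eq : 5 * remainderConst a - (5 + 2 * a) * (a + 1) ^ 4 =
      a * ((2 - a) * (a * (5 * a ^ 3 + 7 * a ^ 2 + 12 * a + 6)) + 3) := by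
    rw [remainderConst]; ring
  have : 0 ≤ 2 - a := sub_nonneg.mpr ha₂
  rw [← sub_nonneg, gap_eq]
  positivity

lemma sq_remainderSlope_lt (ha₀ : 0 ≤ a) (ha₂ : a ≤ 2) :
    5 * remainderSlope a ^ 2 < remainderLead a * (5 + 2 * a) := by
  have gap_eq : remainderLead a * (5 + 2 * a) - 5 * remainderSlope a ^ 2 =
      (2 - a) * (a * (5 * a ^ 8 + 12 * a ^ 7 + 7 * a ^ 6 + 2 * a ^ 5 + 45 * a ^ 4 + 90 * a ^ 3 +
        86 * a ^ 2 + 72 * a + 20)) + 26 * a + 15 := by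
    rw [remainderLead, remainderSlope]; ring
  have : 0 ≤ 2 - a := sub_nonneg.mpr ha₂
  rw [← sub_pos, gap_eq]
  positivity

lemma remainderLead_pos (ha₀ : 0 ≤ a) (ha₂ : a ≤ 2) : 0 < remainderLead a := by
  have weighted_pos : 0 < remainderLead a * (5 + 2 * a) :=
    (by positivity : 0 ≤ 5 * remainderSlope a ^ 2).trans_lt (sq_remainderSlope_lt ha₀ ha₂)
  exact pos_of_mul_pos_left weighted_pos (by positivity)

lemma discrim_remainder_neg (ha₀ : 0 ≤ a) (ha₂ : a ≤ 2) :
    discrim ((a + 1) ^ 2 * remainderLead a) (-4 * (a + 1) ^ 3 * remainderSlope a)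
      (4 * remainderConst a) < 0 := by
  have weighted_lt :
      5 * ((a + 1) ^ 4 * remainderSlope a ^ 2) < 5 * (remainderLead a * remainderConst a) :=
    calc
      5 * ((a + 1) ^ 4 * remainderSlope a ^ 2) = (a + 1) ^ 4 * (5 * remainderSlope a ^ 2) := by ring
      _ < (a + 1) ^ 4 * (remainderLead a * (5 + 2 * a)) :=
        mul_lt_mul_of_pos_left (sq_remainderSlope_lt ha₀ ha₂) (by positivity)
      _ = remainderLead a * ((5 + 2 * a) * (a + 1) ^ 4) := by ring
      _ ≤ remainderLead a * (5 * remainderConst a) :=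
        mul_le_mul_of_nonneg_left (weight_mul_le_remainderConst ha₀ ha₂)
          (remainderLead_pos ha₀ ha₂).le
      _ = 5 * (remainderLead a * remainderConst a) := by ring
  rw [discrim_remainder]
  exact mul_neg_of_pos_of_neg (by positivity)
    (sub_neg.mpr (lt_of_mul_lt_mul_left weighted_lt (by norm_num)))

end Bounds

end isingPottsQuartic

open isingPottsQuartic in
theorem stmt16_general {K : Type*} [Field K] [LinearOrder K] [IsStrictOrderedRing K] {a : K}
    (ha₀ : 0 ≤ a) (ha₂ : a ≤ 2) (x : K) : isingPottsQuartic a x < 0 := by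
  have lead_pos : 0 < (a + 1) ^ 2 * remainderLead a :=
    mul_pos (by positivity) (remainderLead_pos ha₀ ha₂)
  have remainder_pos :=
    quadratic_pos_of_discrim_neg lead_pos (discrim_remainder_neg ha₀ ha₂) x
  have neg_four_mul_pos : 0 < -4 * isingPottsQuartic a x := by
    rw [neg_four_mul_eq_sq_add_remainder]
    exact add_pos_of_nonneg_of_pos (sq_nonneg _) remainder_pos
  linarith

/-- for `a = 3/2`, the quartic `P_{3/2}` of the
(2,3)-Ising-Potts model is strictly negative on `[0, ∞)`; in particular
`P_{3/2}(x) = 0` has no nonnegative real solutions. -/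
theorem stmt16 :
    (∀ x : ℝ, 0 ≤ x →
      -4 * ((5 : ℝ) / 2) ^ 4 * x ^ 4 + 2 * (1 / 2) * ((5 : ℝ) / 2) ^ 6 * x ^ 3 -
        ((5 : ℝ) / 2) ^ 2 * (2 * ((3 : ℝ) / 2) ^ 5 + 5 * ((3 : ℝ) / 2) ^ 4 +
          6 * ((3 : ℝ) / 2) ^ 3 + 6 * ((3 : ℝ) / 2) ^ 2 + 8 * ((3 : ℝ) / 2) + 1) * x ^ 2 +
        ((3 : ℝ) / 2) * (3 * ((3 : ℝ) / 2) ^ 2 + 4 * ((3 : ℝ) / 2) - 1) * ((5 : ℝ) / 2) ^ 3 * x -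
        (((5 : ℝ) / 2) ^ 5 + ((3 : ℝ) / 2) ^ 2) < 0) ∧
    ¬∃ x : ℝ, 0 ≤ x ∧
      -4 * ((5 : ℝ) / 2) ^ 4 * x ^ 4 + 2 * (1 / 2) * ((5 : ℝ) / 2) ^ 6 * x ^ 3 -
        ((5 : ℝ) / 2) ^ 2 * (2 * ((3 : ℝ) / 2) ^ 5 + 5 * ((3 : ℝ) / 2) ^ 4 +
          6 * ((3 : ℝ) / 2) ^ 3 + 6 * ((3 : ℝ) / 2) ^ 2 + 8 * ((3 : ℝ) / 2) + 1) * x ^ 2 +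
        ((3 : ℝ) / 2) * (3 * ((3 : ℝ) / 2) ^ 2 + 4 * ((3 : ℝ) / 2) - 1) * ((5 : ℝ) / 2) ^ 3 * x -
        (((5 : ℝ) / 2) ^ 5 + ((3 : ℝ) / 2) ^ 2) = 0 := by
  refine (and_iff_left_of_imp fun neg ⟨x, hx, root⟩ ↦ (neg x hx).ne root).mpr fun x _ ↦ ?_
  have neg := stmt16_general (a := (3 / 2 : ℝ)) (by norm_num) (by norm_num) x
  rw [isingPottsQuartic] at neg
  linarith
end
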